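/- There exists a universal constant C such that for every a ≥ π with μ = √(1 − π²/a²) ≥ 1/2 and every t > 0: (i) for all x, r ∈ [0,a] with x ≥ r + a/20 whenever t ≤ a², ∫_r^a 𝔭_t(x,y) dy ≤ C·(1+r)·(e^{μ(a−r)}/a³)·( w_Z(x) + 1_{t ≤ a²}·((1+r²)/a)·w_Y(x) ); and (ii) for all x, r ∈ [0,a], ∫_r^a 𝔭_t(x,y) dy ≤ C·e^{μ(x−r)}. -/

import Mathlib

open Real MeasureTheory Set Filter

/-- Transition density of Brownian motion killed upon exiting `(0,a)`. -/
noncomputable def pker (a t x y : ℝ) : ℝ :=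
  (2/a) * ∑' n : ℕ, Real.exp (-(π^2) * ((n : ℝ) + 1)^2 * t / (2 * a^2)) *
    Real.sin (π * ((n : ℝ) + 1) * x / a) * Real.sin (π * ((n : ℝ) + 1) * y / a)

/-- `μ = √(1 − π²/a²)`. -/
noncomputable def muFn (a : ℝ) : ℝ := Real.sqrt (1 - π^2 / a^2)

/-- `w_Z(x) = a·e^{μ(x−a)}·sin(πx/a)`. -/
noncomputable def wZ (a x : ℝ) : ℝ := a * Real.exp (muFn a * (x - a)) * Real.sin (π * x / a)

/-- `w_Y(x) = e^{μ(x−a)}`. -/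
noncomputable def wY (a x : ℝ) : ℝ := Real.exp (muFn a * (x - a))

/-- Density of the branching Brownian motion with drift `−μ` before absorption. -/
noncomputable def pdens (a t x y : ℝ) : ℝ :=
  Real.exp (muFn a * (x - y) + π^2 * t / (2 * a^2)) * pker a t x y

/-!
For `t ≥ a²` every mode of the sine series is, after removal of the decay of the leading one,
exponentially small compared with `sin (πx/a) sin (πy/a)`. For `t ≤ a²` Poisson summation turns the
series into a sum over the images of the source. At most one image is close, so the kernel is at
most the free heat kernel plus `O(1/a)`, which integrates to the second bound. When moreover
`y ≤ x - a/k`, pairing the image `n` with the image `-1 - n` produces second differences, with steps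
`y` and `a - x`, of the heat kernel far from its singularity, so the kernel is `O(y (a - x) / a³)`;
integrated against `exp (-μ y)` this is the `w_Z` term of the first bound. If `r ≤ x - a/k`, the
points `y ≥ x - a/(2k)` are covered by the second bound: the factor `exp (-μ a/(2k))` gained there
beats any power of `a` and gives the `w_Y` term.
-/

open HurwitzZeta

section Trigonometry

theorem abs_sin_nat_mul_le (n : ℕ) (θ : ℝ) : |sin (n * θ)| ≤ n * |sin θ| := by
  induction n with
  | zero => simp
  | succ n ih =>
    calc |sin ((n + 1 : ℕ) * θ)| = |sin (n * θ) * cos θ + cos (n * θ) * sin θ| := by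
          rw [Nat.cast_succ, add_one_mul, sin_add]
      _ ≤ |sin (n * θ)| * |cos θ| + |cos (n * θ)| * |sin θ| := by
          simpa only [abs_mul] using abs_add_le (sin (n * θ) * cos θ) (cos (n * θ) * sin θ)
      _ ≤ (n * |sin θ|) * 1 + 1 * |sin θ| := by
          gcongr <;> exact abs_cos_le_one _
      _ = (n + 1 : ℕ) * |sin θ| := by push_cast; ring

theorem sin_pi_mul_div_nonneg {a x : ℝ} (hx : x ∈ Icc 0 a) : 0 ≤ sin (π * x / a) := by
  have ha : 0 ≤ a := hx.1.trans hx.2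
  refine sin_nonneg_of_nonneg_of_le_pi (by have := hx.1; positivity) ?_
  exact div_le_of_le_mul₀ ha pi_nonneg (mul_le_mul_of_nonneg_left hx.2 pi_nonneg)

theorem two_mul_mul_one_sub_le_sin_pi_mul {s : ℝ} (hs : s ∈ Icc 0 1) :
    2 * s * (1 - s) ≤ sin (π * s) := by
  wlog h : s ≤ 1 / 2 generalizing s
  · have := this (s := 1 - s) ⟨by linarith [hs.2], by linarith [hs.1]⟩ (by linarith)
    rw [show π * (1 - s) = π - π * s by ring, sin_pi_sub] at this
    linarith
  have hchord : 2 / π * (π * s) ≤ sin (π * s) :=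
    mul_le_sin (mul_nonneg pi_nonneg hs.1) (by nlinarith [pi_pos])
  have hcancel : 2 / π * (π * s) = 2 * s := by field_simp
  nlinarith [sq_nonneg s]

end Trigonometry

section Calculus

theorem norm_mixed_second_difference_le {E : Type*} [NormedAddCommGroup E] [NormedSpace ℝ E]
    {f f' f'' : ℝ → E} {c y d M : ℝ} (hy : 0 ≤ y) (hd : 0 ≤ d)
    (hf : ∀ w ∈ Icc (c - (y + d)) (c + (y + d)), HasDerivAt f (f' w) w)
    (hf' : ∀ w ∈ Icc (c - (y + d)) (c + (y + d)), HasDerivAt f' (f'' w) w)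
    (hM : ∀ w ∈ Icc (c - (y + d)) (c + (y + d)), ‖f'' w‖ ≤ M) :
    ‖f (c + y + d) - f (c + y - d) - (f (c - y + d) - f (c - y - d))‖ ≤ 4 * y * d * M := by
  have hadd : ∀ v ∈ Icc (c - y) (c + y), v + d ∈ Icc (c - (y + d)) (c + (y + d)) :=
    fun v hv => ⟨by linarith [hv.1], by linarith [hv.2]⟩
  have hsub : ∀ v ∈ Icc (c - y) (c + y), v - d ∈ Icc (c - (y + d)) (c + (y + d)) :=
    fun v hv => ⟨by linarith [hv.1], by linarith [hv.2]⟩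
  have hderiv : ∀ v ∈ Icc (c - y) (c + y), HasDerivWithinAt (fun v => f (v + d) - f (v - d))
      (f' (v + d) - f' (v - d)) (Icc (c - y) (c + y)) v := fun v hv =>
    (((hf _ (hadd v hv)).comp_add_const v d).sub
      ((hf _ (hsub v hv)).comp_sub_const v d)).hasDerivWithinAt
  have hbound : ∀ v ∈ Icc (c - y) (c + y), ‖f' (v + d) - f' (v - d)‖ ≤ M * (2 * d) := by
    intro v hv
    have := (convex_Icc _ _).norm_image_sub_le_of_norm_hasDerivWithin_le
      (fun w hw => (hf' w hw).hasDerivWithinAt) hM (hsub v hv) (hadd v hv)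
    rwa [add_sub_sub_cancel, ← two_mul, norm_of_nonneg (by positivity)] at this
  have := (convex_Icc _ _).norm_image_sub_le_of_norm_hasDerivWithin_le hderiv hbound
    (left_mem_Icc.2 (by linarith)) (right_mem_Icc.2 (by linarith))
  rw [add_sub_sub_cancel, ← two_mul, norm_of_nonneg (by positivity)] at this
  linarith

theorem integral_exp_neg_mul_mul_id_le {r m μ : ℝ} (hμ : 0 < μ) (hm : 0 ≤ m) :
    ∫ y in r..m, exp (-(μ * (y - r))) * y ≤ r / μ + 1 / μ ^ 2 := by
  have hderiv (y : ℝ) : HasDerivAt (fun y => -((y / μ + 1 / μ ^ 2) * exp (-(μ * (y - r)))))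
      (exp (-(μ * (y - r))) * y) y := by
    have hexp := (((hasDerivAt_id y).sub_const r).const_mul μ).neg.exp
    have hlin := ((hasDerivAt_id y).div_const μ).add_const (1 / μ ^ 2)
    refine (hlin.mul hexp).neg.congr_deriv ?_
    simp only [id_eq, Pi.neg_apply]
    field_simp
    ring
  rw [intervalIntegral.integral_eq_sub_of_hasDerivAt (fun y _ => hderiv y)
    (Continuous.intervalIntegrable (by fun_prop) _ _)]
  have : 0 ≤ (m / μ + 1 / μ ^ 2) * exp (-(μ * (m - r))) := by positivity
  simp only [sub_self, mul_zero, neg_zero, exp_zero, mul_one]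
  linarith

theorem exp_neg_le_factorial_div_pow {z : ℝ} (hz : 0 < z) (n : ℕ) :
    exp (-z) ≤ n.factorial / z ^ n := by
  rw [exp_neg, ← inv_div]
  exact inv_anti₀ (by positivity) (pow_div_factorial_le_exp z hz.le n)

end Calculus

section HeatKernel

/-- The transition density at displacement `z` of Brownian motion on the whole line at time `t`. -/
noncomputable def heatKernel (t z : ℝ) : ℝ := (√(2 * π * t))⁻¹ * exp (-z ^ 2 / (2 * t))

theorem heatKernel_nonneg (t z : ℝ) : 0 ≤ heatKernel t z := by
  unfold heatKernel; positivity

@[simp]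
theorem heatKernel_neg (t z : ℝ) : heatKernel t (-z) = heatKernel t z := by
  rw [heatKernel, neg_sq, heatKernel]

@[fun_prop]
theorem continuous_heatKernel (t : ℝ) : Continuous (heatKernel t) := by
  unfold heatKernel; fun_prop

theorem hasDerivAt_heatKernel (t z : ℝ) :
    HasDerivAt (heatKernel t) (-(z / t) * heatKernel t z) z := by
  refine (((hasDerivAt_pow 2 z).neg.div_const (2 * t)).exp.const_mul _).congr_deriv ?_
  simp only [heatKernel, Pi.neg_apply]
  ring

theorem hasDerivAt_deriv_heatKernel (t z : ℝ) :
    HasDerivAt (fun z => -(z / t) * heatKernel t z)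
      ((z ^ 2 / t ^ 2 - 1 / t) * heatKernel t z) z := by
  refine (((hasDerivAt_id z).div_const t).neg.mul (hasDerivAt_heatKernel t z)).congr_deriv ?_
  simp only [id_eq, Pi.neg_apply]
  ring

theorem pow_three_mul_sq_add_one_mul_exp_le (q : ℝ) :
    q ^ 3 * (q ^ 2 + 1) * exp (-(q ^ 2 / 2)) ≤ 98 := by
  have hpoly : q ^ 3 * (q ^ 2 + 1) ≤ 2 + 2 * q ^ 6 := by
    nlinarith [sq_nonneg (q ^ 3 - 1), sq_nonneg (q ^ 3 - q ^ 2), sq_nonneg (q ^ 2 - 1)]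
  have hexp : (q ^ 2 / 2) ^ 3 / (Nat.factorial 3 : ℕ) ≤ exp (q ^ 2 / 2) :=
    pow_div_factorial_le_exp _ (by positivity) 3
  have hone : 1 ≤ exp (q ^ 2 / 2) := one_le_exp (by positivity)
  rw [exp_neg, ← div_eq_mul_inv, div_le_iff₀ (exp_pos _)]
  norm_num [Nat.factorial] at hexp
  nlinarith

theorem heatKernel_mul_pow_three_mul_le {t : ℝ} (ht : 0 < t) (z : ℝ) :
    heatKernel t z * |z| ^ 3 * (z ^ 2 + t) ≤ 98 * t ^ 2 := by
  obtain ⟨s, hs, rfl⟩ : ∃ s : ℝ, 0 < s ∧ t = s ^ 2 :=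
    ⟨√t, sqrt_pos.2 ht, (sq_sqrt ht.le).symm⟩
  obtain ⟨q, hq, hz⟩ : ∃ q : ℝ, 0 ≤ q ∧ |z| = q * s :=
    ⟨|z| / s, by positivity, by field_simp⟩
  have hnorm : (√(2 * π * s ^ 2))⁻¹ ≤ s⁻¹ :=
    inv_anti₀ hs (le_sqrt_of_sq_le (by nlinarith [pi_gt_three, sq_nonneg s]))
  rw [heatKernel, ← sq_abs z, hz]
  calc (√(2 * π * s ^ 2))⁻¹ * exp (-(q * s) ^ 2 / (2 * s ^ 2)) * (q * s) ^ 3 *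
        ((q * s) ^ 2 + s ^ 2)
      ≤ s⁻¹ * exp (-(q * s) ^ 2 / (2 * s ^ 2)) * (q * s) ^ 3 * ((q * s) ^ 2 + s ^ 2) := by
        gcongr
    _ = q ^ 3 * (q ^ 2 + 1) * exp (-(q ^ 2 / 2)) * (s ^ 2) ^ 2 := by
        rw [show -(q * s) ^ 2 / (2 * s ^ 2) = -(q ^ 2 / 2) by field_simp]
        field_simp
    _ ≤ 98 * (s ^ 2) ^ 2 := by gcongr; exact pow_three_mul_sq_add_one_mul_exp_le q

theorem heatKernel_le_div_pow_three {t z : ℝ} (ht : 0 < t) (hz : z ≠ 0) :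
    heatKernel t z ≤ 98 * t / |z| ^ 3 := by
  rw [le_div_iff₀ (by positivity)]
  have hzero := heatKernel_nonneg t z
  refine le_of_mul_le_mul_right ?_ ht
  calc heatKernel t z * |z| ^ 3 * t ≤ heatKernel t z * |z| ^ 3 * (z ^ 2 + t) := by
        gcongr; linarith [sq_nonneg z]
    _ ≤ 98 * t * t := by linarith [heatKernel_mul_pow_three_mul_le ht z]

theorem abs_deriv_deriv_heatKernel_le {t z : ℝ} (ht : 0 < t) (hz : z ≠ 0) :
    |(z ^ 2 / t ^ 2 - 1 / t) * heatKernel t z| ≤ 98 / |z| ^ 3 := by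
  have hcoeff : |z ^ 2 / t ^ 2 - 1 / t| ≤ (z ^ 2 + t) / t ^ 2 := by
    calc |z ^ 2 / t ^ 2 - 1 / t| ≤ |z ^ 2 / t ^ 2| + |1 / t| := abs_sub _ _
      _ = z ^ 2 / t ^ 2 + 1 / t := by
        rw [abs_of_nonneg (by positivity), abs_of_nonneg (by positivity)]
      _ = (z ^ 2 + t) / t ^ 2 := by field_simp
  have hzero := heatKernel_nonneg t z
  rw [le_div_iff₀ (by positivity), abs_mul, abs_of_nonneg hzero]
  calc |z ^ 2 / t ^ 2 - 1 / t| * heatKernel t z * |z| ^ 3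
      ≤ (z ^ 2 + t) / t ^ 2 * heatKernel t z * |z| ^ 3 := by gcongr
    _ = heatKernel t z * |z| ^ 3 * (z ^ 2 + t) / t ^ 2 := by ring
    _ ≤ 98 := div_le_of_le_mul₀ (by positivity) (by norm_num) (heatKernel_mul_pow_three_mul_le ht z)

theorem integral_heatKernel_sub_le_one {t : ℝ} (ht : 0 < t) (x : ℝ) {r m : ℝ} (hrm : r ≤ m) :
    ∫ y in r..m, heatKernel t (y - x) ≤ 1 := by
  lift t to NNReal using ht.le
  have hpos : t ≠ 0 := (NNReal.coe_pos.1 ht).ne'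
  rw [intervalIntegral.integral_of_le hrm,
    ← ProbabilityTheory.integral_gaussianPDFReal_eq_one x hpos]
  exact setIntegral_le_integral (ProbabilityTheory.integrable_gaussianPDFReal x t)
    (ae_of_all _ (ProbabilityTheory.gaussianPDFReal_nonneg x t))

end HeatKernel

section KilledKernel

variable {a t x y : ℝ}

/-- The `n`-th summand, counted from `0`, of the sine series defining `pker a t x y`. -/
noncomputable def sineMode (a t x y : ℝ) (n : ℕ) : ℝ :=
  exp (-(π ^ 2) * ((n : ℝ) + 1) ^ 2 * t / (2 * a ^ 2)) *
    sin (π * ((n : ℝ) + 1) * x / a) * sin (π * ((n : ℝ) + 1) * y / a)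

theorem pker_eq_tsum_sineMode (a t x y : ℝ) : pker a t x y = 2 / a * ∑' n, sineMode a t x y n :=
  rfl

theorem hasSum_sineMode (ha : 0 < a) (ht : 0 < t) (x y : ℝ) :
    HasSum (sineMode a t x y) (4⁻¹ *
      (cosKernel ((x - y) / (2 * a) : ℝ) (π * t / (2 * a ^ 2)) -
        cosKernel ((x + y) / (2 * a) : ℝ) (π * t / (2 * a ^ 2)))) := by
  have hτ : 0 < π * t / (2 * a ^ 2) := by positivity
  have h := ((hasSum_nat_cosKernel₀ ((x - y) / (2 * a)) hτ).sub
    (hasSum_nat_cosKernel₀ ((x + y) / (2 * a)) hτ)).mul_left (4⁻¹ : ℝ)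
  rw [sub_sub_sub_cancel_right] at h
  refine (funext fun n => ?_ : _ = sineMode a t x y) ▸ h
  have hminus : 2 * π * ((x - y) / (2 * a)) * ((n : ℝ) + 1) =
      π * (n + 1) * x / a - π * (n + 1) * y / a := by field_simp
  have hplus : 2 * π * ((x + y) / (2 * a)) * ((n : ℝ) + 1) =
      π * (n + 1) * x / a + π * (n + 1) * y / a := by field_simp
  have hdecay : -π * ((n : ℝ) + 1) ^ 2 * (π * t / (2 * a ^ 2)) =
      -(π ^ 2) * (n + 1) ^ 2 * t / (2 * a ^ 2) := by ring
  rw [hminus, hplus, hdecay, cos_sub, cos_add, sineMode]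
  ring

-- Poisson summation, in the form of the functional equation of the theta kernels.
theorem hasSum_heatKernel_add_two_mul (ha : 0 < a) (ht : 0 < t) (z : ℝ) :
    HasSum (fun n : ℤ => heatKernel t (z + 2 * a * n))
      ((2 * a)⁻¹ * cosKernel (z / (2 * a) : ℝ) (π * t / (2 * a ^ 2))) := by
  set τ := π * t / (2 * a ^ 2) with hτ_def
  have hτ : 0 < τ := by positivity
  have hnorm : (√(2 * π * t))⁻¹ = (2 * a)⁻¹ * (√τ)⁻¹ := by
    rw [← mul_inv, show 2 * π * t = (2 * a) ^ 2 * τ by rw [hτ_def]; field_simp,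
      sqrt_mul (by positivity), sqrt_sq (by positivity)]
  have hvalue : (2 * a)⁻¹ * (√τ)⁻¹ * evenKernel (z / (2 * a) : ℝ) τ⁻¹ =
      (2 * a)⁻¹ * cosKernel (z / (2 * a) : ℝ) τ := by
    have hsqrt : √τ ≠ 0 := (sqrt_pos.2 hτ).ne'
    rw [evenKernel_functional_equation, one_div τ⁻¹, inv_inv, ← sqrt_eq_rpow, sqrt_inv]
    field_simp
  have hexponent (n : ℤ) :
      -(z + 2 * a * n) ^ 2 / (2 * t) = -π * (n + z / (2 * a)) ^ 2 * τ⁻¹ := by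
    rw [hτ_def]; field_simp; ring
  rw [← hvalue]
  simp only [heatKernel, hnorm, hexponent]
  exact (hasSum_int_evenKernel (z / (2 * a)) (inv_pos.2 hτ)).mul_left _

theorem hasSum_pker (ha : 0 < a) (ht : 0 < t) (x y : ℝ) :
    HasSum (fun n : ℤ => heatKernel t (x - y + 2 * a * n) - heatKernel t (x + y + 2 * a * n))
      (pker a t x y) := by
  have hvalue : pker a t x y =
      (2 * a)⁻¹ * cosKernel ((x - y) / (2 * a) : ℝ) (π * t / (2 * a ^ 2)) -
        (2 * a)⁻¹ * cosKernel ((x + y) / (2 * a) : ℝ) (π * t / (2 * a ^ 2)) := by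
    rw [pker_eq_tsum_sineMode, (hasSum_sineMode ha ht x y).tsum_eq]
    field_simp
    ring
  exact hvalue ▸ (hasSum_heatKernel_add_two_mul ha ht (x - y)).sub
    (hasSum_heatKernel_add_two_mul ha ht (x + y))

theorem continuous_pker (ha : 0 < a) (ht : 0 < t) (x : ℝ) : Continuous (pker a t x) := by
  have hτ : 0 < π * t / (2 * a ^ 2) := by positivity
  refine continuous_const.mul (continuous_tsum (fun n => by fun_prop)
    (hasSum_nat_cosKernel₀ 0 hτ).summable fun n y => ?_)
  rw [norm_mul, norm_mul, norm_of_nonneg (exp_pos _).le, mul_zero, zero_mul, cos_zero, mul_one]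
  calc exp (-(π ^ 2) * ((n : ℝ) + 1) ^ 2 * t / (2 * a ^ 2)) * ‖sin (π * (n + 1) * x / a)‖ *
        ‖sin (π * (n + 1) * y / a)‖
      ≤ exp (-(π ^ 2) * ((n : ℝ) + 1) ^ 2 * t / (2 * a ^ 2)) * 1 * 1 := by
        gcongr <;> exact abs_sin_le_one _
    _ = exp (-π * (n + 1) ^ 2 * (π * t / (2 * a ^ 2))) := by ring_nf
    _ ≤ 2 * exp (-π * (n + 1) ^ 2 * (π * t / (2 * a ^ 2))) := by
        linarith [exp_pos (-π * ((n : ℝ) + 1) ^ 2 * (π * t / (2 * a ^ 2)))]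

theorem summable_one_div_abs_int_add_pow_three (b : ℝ) :
    Summable fun n : ℤ => 1 / |(n : ℝ) + b| ^ 3 := by
  exact_mod_cast (Real.summable_one_div_int_add_rpow b (3 : ℕ)).2 (by norm_num)

theorem heatKernel_image_le {z : ℝ} (ha : 0 < a) (ht : 0 < t) (hta : t ≤ a ^ 2) (hz : |z| ≤ a)
    {n : ℤ} (hn : n ≠ 0) :
    heatKernel t (z + 2 * a * n) ≤ 98 / a * (1 / |(n : ℝ)| ^ 3) := by
  have hn1 : (1 : ℝ) ≤ |(n : ℝ)| := by exact_mod_cast Int.one_le_abs hn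
  have hfar : a * |(n : ℝ)| ≤ |z + 2 * a * n| := by
    have h := abs_sub_abs_le_abs_sub (2 * a * (n : ℝ)) (-z)
    rw [abs_neg, abs_mul, abs_of_pos (by positivity : 0 < 2 * a), sub_neg_eq_add, add_comm _ z] at h
    nlinarith
  have hne : z + 2 * a * n ≠ 0 := abs_pos.1 (lt_of_lt_of_le (by positivity) hfar)
  calc heatKernel t (z + 2 * a * n) ≤ 98 * t / |z + 2 * a * n| ^ 3 :=
        heatKernel_le_div_pow_three ht hne
    _ ≤ 98 * a ^ 2 / (a * |(n : ℝ)|) ^ 3 := by gcongr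
    _ = 98 / a * (1 / |(n : ℝ)| ^ 3) := by field_simp

theorem exists_pker_le_heatKernel_add :
    ∃ K : ℝ, 0 ≤ K ∧ ∀ {a t x y : ℝ}, 0 < a → 0 < t → t ≤ a ^ 2 → x ∈ Icc 0 a → y ∈ Icc 0 a →
      pker a t x y ≤ heatKernel t (y - x) + K / a := by
  have hsum := summable_one_div_abs_int_add_pow_three 0
  refine ⟨98 * ∑' n : ℤ, 1 / |(n : ℝ) + 0| ^ 3,
    mul_nonneg (by norm_num) (tsum_nonneg fun n => by positivity), ?_⟩
  intro a t x y ha ht hta hx hy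
  have hxy : |x - y| ≤ a := abs_sub_le_of_nonneg_of_le hx.1 hx.2 hy.1 hy.2
  rw [← neg_sub x y, heatKernel_neg, mul_div_right_comm]
  refine hasSum_le (fun n => ?_) (hasSum_pker ha ht x y)
    ((hasSum_ite_eq 0 (heatKernel t (x - y))).add (hsum.hasSum.mul_left (98 / a)))
  have hrefl := heatKernel_nonneg t (x + y + 2 * a * n)
  rcases eq_or_ne n 0 with rfl | hn
  · simpa using hrefl
  · have := heatKernel_image_le ha ht hta hxy hn
    simp only [hn, if_false, zero_add, add_zero]
    linarith

theorem mul_abs_int_add_half_le_abs {k w : ℝ} (ha : 0 < a) (n : ℤ)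
    (hw : |w - a * (2 * n + 1)| ≤ a - a / k) :
    2 * a / k * |(n : ℝ) + 1 / 2| ≤ |w| := by
  have hhalf : 1 ≤ 2 * |(n : ℝ) + 1 / 2| := by
    have : (1 : ℝ) ≤ |2 * (n : ℝ) + 1| := by exact_mod_cast Int.one_le_abs (by omega)
    calc 1 ≤ |2 * (n : ℝ) + 1| := this
      _ = |2 * ((n : ℝ) + 1 / 2)| := by ring_nf
      _ = 2 * |(n : ℝ) + 1 / 2| := by rw [abs_mul, abs_two]
  have hcentre : |a * (2 * n + 1)| = a * (2 * |(n : ℝ) + 1 / 2|) := by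
    rw [show a * (2 * (n : ℝ) + 1) = a * (2 * (n + 1 / 2)) by ring, abs_mul, abs_mul, abs_two,
      abs_of_pos ha]
  have htri := abs_sub_abs_le_abs_sub (a * (2 * (n : ℝ) + 1)) w
  rw [abs_sub_comm, hcentre] at htri
  have hrest : 0 ≤ a - a / k := (abs_nonneg _).trans hw
  calc 2 * a / k * |(n : ℝ) + 1 / 2| = a / k * (2 * |(n : ℝ) + 1 / 2|) := by ring
    _ ≤ a * (2 * |(n : ℝ) + 1 / 2|) - (a - a / k) := by nlinarith
    _ ≤ |w| := by linarith

theorem norm_heatKernel_mixed_difference_le {k d : ℝ} (ha : 0 < a) (ht : 0 < t) (hk : 0 < k)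
    (hy : 0 ≤ y) (hd : 0 ≤ d) (hyd : y + d ≤ a - a / k) (n : ℤ) :
    ‖heatKernel t (a * (2 * n + 1) + y + d) - heatKernel t (a * (2 * n + 1) + y - d) -
        (heatKernel t (a * (2 * n + 1) - y + d) - heatKernel t (a * (2 * n + 1) - y - d))‖ ≤
      4 * y * d * (98 * (k / (2 * a)) ^ 3 * (1 / |(n : ℝ) + 1 / 2| ^ 3)) := by
  refine norm_mixed_second_difference_le hy hd (fun w _ => hasDerivAt_heatKernel t w)
    (fun w _ => hasDerivAt_deriv_heatKernel t w) fun w hw => ?_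
  have hn : (n : ℝ) + 1 / 2 ≠ 0 := by
    intro h
    have : (2 * n + 1 : ℝ) = 0 := by linarith
    norm_cast at this
    omega
  have hfar : 2 * a / k * |(n : ℝ) + 1 / 2| ≤ |w| :=
    mul_abs_int_add_half_le_abs ha n
      (abs_le.2 ⟨by linarith [hw.1], by linarith [hw.2]⟩)
  have hne : w ≠ 0 := abs_pos.1 (lt_of_lt_of_le (by positivity) hfar)
  calc ‖(w ^ 2 / t ^ 2 - 1 / t) * heatKernel t w‖ ≤ 98 / |w| ^ 3 :=
        abs_deriv_deriv_heatKernel_le ht hne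
    _ ≤ 98 / (2 * a / k * |(n : ℝ) + 1 / 2|) ^ 3 := by gcongr
    _ = 98 * (k / (2 * a)) ^ 3 * (1 / |(n : ℝ) + 1 / 2| ^ 3) := by field_simp

-- Each summand is the image `n` of the source plus the image `-1 - n`.
theorem hasSum_heatKernel_mixed_difference (ha : 0 < a) (ht : 0 < t) (x y : ℝ) :
    HasSum (fun n : ℤ =>
      heatKernel t (a * (2 * n + 1) + y + (a - x)) - heatKernel t (a * (2 * n + 1) + y - (a - x)) -
        (heatKernel t (a * (2 * n + 1) - y + (a - x)) -
          heatKernel t (a * (2 * n + 1) - y - (a - x)))) (2 * pker a t x y) := by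
  have himages := hasSum_pker ha ht x y
  have hreflected := (Equiv.subLeft (-1 : ℤ)).hasSum_iff.2 himages
  convert himages.add hreflected using 1
  · ext n
    have hfirst : heatKernel t (a * (2 * n + 1) + y + (a - x)) =
        heatKernel t (x - y + 2 * a * (-1 - n : ℤ)) := by
      rw [← heatKernel_neg]; push_cast; ring_nf
    have hthird : heatKernel t (a * (2 * n + 1) - y + (a - x)) =
        heatKernel t (x + y + 2 * a * (-1 - n : ℤ)) := by
      rw [← heatKernel_neg]; push_cast; ring_nf
    simp only [Function.comp_apply, Equiv.subLeft_apply, hfirst, hthird]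
    ring_nf
  · ring

theorem exists_pker_le_mul_sub {k : ℝ} (hk : 0 < k) :
    ∃ L : ℝ, 0 ≤ L ∧ ∀ {a t x y : ℝ}, 0 < a → 0 < t → x ≤ a → 0 ≤ y → y + a / k ≤ x →
      pker a t x y ≤ L * (y * (a - x)) / a ^ 3 := by
  have hsum := summable_one_div_abs_int_add_pow_three (1 / 2)
  refine ⟨2 * 98 * (k / 2) ^ 3 * ∑' n : ℤ, 1 / |(n : ℝ) + 1 / 2| ^ 3,
    mul_nonneg (by positivity) (tsum_nonneg fun n => by positivity), ?_⟩
  intro a t x y ha ht hx hy hxy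
  have h := hasSum_le
    (fun n => (le_norm_self _).trans
      (norm_heatKernel_mixed_difference_le ha ht hk hy (sub_nonneg.2 hx) (by linarith) n))
    (hasSum_heatKernel_mixed_difference ha ht x y)
    ((hsum.hasSum.mul_left (98 * (k / (2 * a)) ^ 3)).mul_left (4 * y * (a - x)))
  refine le_of_mul_le_mul_left (h.trans_eq ?_) two_pos
  field_simp
  ring

end KilledKernel

section RenormalizedKernel

variable {a t x y : ℝ}

/-- The killed kernel `pker` with the decay `exp (-π² t / (2 a²))` of its leading mode removed. -/
noncomputable def renormKernel (a t x y : ℝ) : ℝ := exp (π ^ 2 * t / (2 * a ^ 2)) * pker a t x y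

theorem summable_add_one_sq_mul_exp_neg :
    Summable fun n : ℕ => ((n : ℝ) + 1) ^ 2 * exp (-n) := by
  have h := Real.summable_pow_mul_exp_neg_nat_mul 2 one_pos
  refine (((summable_nat_add_iff 1).2 h).mul_left (exp 1)).congr fun n => ?_
  rw [mul_left_comm, ← exp_add]
  push_cast
  ring_nf

theorem exp_mul_abs_sineMode_le (ha : 0 < a) (hta : a ^ 2 ≤ t) (hx : x ∈ Icc 0 a)
    (hy : y ∈ Icc 0 a) (n : ℕ) :
    exp (π ^ 2 * t / (2 * a ^ 2)) * |sineMode a t x y n| ≤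
      ((n : ℝ) + 1) ^ 2 * exp (-n) * (sin (π * x / a) * sin (π * y / a)) := by
  have hsin {z : ℝ} (hz : z ∈ Icc 0 a) :
      |sin (π * ((n : ℝ) + 1) * z / a)| ≤ (n + 1) * sin (π * z / a) := by
    have h := abs_sin_nat_mul_le (n + 1) (π * z / a)
    rw [abs_of_nonneg (sin_pi_mul_div_nonneg hz)] at h
    push_cast at h
    convert h using 3
    ring
  have hgap : exp (π ^ 2 * t / (2 * a ^ 2)) * exp (-(π ^ 2) * ((n : ℝ) + 1) ^ 2 * t / (2 * a ^ 2)) ≤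
      exp (-n) := by
    have hrate : 1 ≤ π ^ 2 / 2 * (t / a ^ 2) :=
      one_le_mul_of_one_le_of_one_le (by nlinarith [pi_gt_three])
        ((one_le_div (by positivity)).2 hta)
    rw [← exp_add, exp_le_exp]
    calc π ^ 2 * t / (2 * a ^ 2) + -(π ^ 2) * ((n : ℝ) + 1) ^ 2 * t / (2 * a ^ 2)
        = -(π ^ 2 / 2 * (t / a ^ 2) * ((n : ℝ) ^ 2 + 2 * n)) := by field_simp; ring
      _ ≤ -(1 * ((n : ℝ) ^ 2 + 2 * n)) := by gcongr
      _ ≤ -n := by nlinarith [(n.cast_nonneg : (0 : ℝ) ≤ n)]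
  have hsx := sin_pi_mul_div_nonneg hx
  rw [sineMode, abs_mul, abs_mul, abs_exp, ← mul_assoc, ← mul_assoc]
  calc _ ≤ exp (-n) * ((n + 1) * sin (π * x / a)) * ((n + 1) * sin (π * y / a)) := by
        gcongr
        exacts [hsin hx, hsin hy]
    _ = _ := by ring

theorem exists_renormKernel_le_sin_mul_sin :
    ∃ K : ℝ, 0 ≤ K ∧ ∀ {a t x y : ℝ}, 0 < a → a ^ 2 ≤ t → x ∈ Icc 0 a → y ∈ Icc 0 a →
      renormKernel a t x y ≤ K / a * (sin (π * x / a) * sin (π * y / a)) := by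
  refine ⟨2 * ∑' n : ℕ, ((n : ℝ) + 1) ^ 2 * exp (-n),
    mul_nonneg zero_le_two (tsum_nonneg fun n => by positivity), ?_⟩
  intro a t x y ha hta hx hy
  have ht : 0 < t := (pow_pos ha 2).trans_le hta
  have hmodes := ((hasSum_sineMode ha ht x y).summable.hasSum.mul_left
    (exp (π ^ 2 * t / (2 * a ^ 2)))).mul_left (2 / a)
  have hbounds := ((summable_add_one_sq_mul_exp_neg.hasSum).mul_right
    (sin (π * x / a) * sin (π * y / a))).mul_left (2 / a)
  have h := hasSum_le (fun n => ?_) hmodes hbounds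
  · calc renormKernel a t x y
        = 2 / a * (exp (π ^ 2 * t / (2 * a ^ 2)) * ∑' n, sineMode a t x y n) := by
          rw [renormKernel, pker_eq_tsum_sineMode, mul_left_comm]
      _ ≤ _ := h
      _ = _ := by ring
  · refine mul_le_mul_of_nonneg_left ?_ (by positivity)
    exact (mul_le_mul_of_nonneg_left (le_abs_self _) (exp_pos _).le).trans
      (exp_mul_abs_sineMode_le ha hta hx hy n)

theorem renormKernel_le_of_le_sq {B : ℝ} (ha : 0 < a) (hta : t ≤ a ^ 2) (hB : 0 ≤ B)
    (h : pker a t x y ≤ B) : renormKernel a t x y ≤ exp (π ^ 2 / 2) * B := by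
  have hexp : exp (π ^ 2 * t / (2 * a ^ 2)) ≤ exp (π ^ 2 / 2) := by
    rw [exp_le_exp, div_le_div_iff₀ (by positivity) two_pos]
    nlinarith [sq_nonneg π]
  calc renormKernel a t x y ≤ exp (π ^ 2 * t / (2 * a ^ 2)) * B := by
        unfold renormKernel; gcongr
    _ ≤ exp (π ^ 2 / 2) * B := by gcongr

theorem exists_renormKernel_le_heatKernel_add :
    ∃ K : ℝ, 0 ≤ K ∧ ∀ {a t x y : ℝ}, 0 < a → 0 < t → x ∈ Icc 0 a → y ∈ Icc 0 a →
      renormKernel a t x y ≤ K * (heatKernel t (y - x) + 1 / a) := by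
  obtain ⟨K₁, hK₁, hsmall⟩ := exists_pker_le_heatKernel_add
  obtain ⟨K₂, hK₂, hlarge⟩ := exists_renormKernel_le_sin_mul_sin
  refine ⟨exp (π ^ 2 / 2) * (1 + K₁) + K₂, by positivity, ?_⟩
  intro a t x y ha ht hx hy
  have hg := heatKernel_nonneg t (y - x)
  rcases le_total t (a ^ 2) with hta | hta
  · calc renormKernel a t x y ≤ exp (π ^ 2 / 2) * (heatKernel t (y - x) + K₁ / a) :=
          renormKernel_le_of_le_sq ha hta (by positivity) (hsmall ha ht hta hx hy)
      _ ≤ exp (π ^ 2 / 2) * ((1 + K₁) * (heatKernel t (y - x) + 1 / a)) := by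
          gcongr
          have : 0 ≤ K₁ * heatKernel t (y - x) + 1 / a := by positivity
          linear_combination this
      _ ≤ _ := by rw [← mul_assoc]; gcongr; linarith
  · calc renormKernel a t x y ≤ K₂ / a * (sin (π * x / a) * sin (π * y / a)) := hlarge ha hta hx hy
      _ ≤ K₂ / a * (1 * 1) := by
          gcongr
          exacts [sin_pi_mul_div_nonneg hy, sin_le_one _, sin_le_one _]
      _ = K₂ * (0 + 1 / a) := by ring
      _ ≤ _ := by gcongr; exact le_add_of_nonneg_left (by positivity)

theorem sub_le_mul_sin_pi_mul_div {k : ℝ} (ha : 0 < a) (hk : 0 < k) (hx : x ∈ Icc (a / k) a) :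
    a - x ≤ k / 2 * a * sin (π * x / a) := by
  have hs0 : 1 / k ≤ x / a := (le_div_iff₀ ha).2 (by linarith [hx.1, one_div_mul_eq_div k a])
  have hs1 : x / a ≤ 1 := (div_le_one ha).2 hx.2
  have hchord := two_mul_mul_one_sub_le_sin_pi_mul
    (s := x / a) ⟨(by positivity : (0 : ℝ) ≤ 1 / k).trans hs0, hs1⟩
  calc a - x = k / 2 * a * (2 * (1 / k) * (1 - x / a)) := by field_simp
    _ ≤ k / 2 * a * (2 * (x / a) * (1 - x / a)) := by gcongr
    _ ≤ k / 2 * a * sin (π * x / a) := by rw [mul_div_assoc π]; gcongr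

theorem exists_renormKernel_le_mul_sin {k : ℝ} (hk : 0 < k) :
    ∃ L : ℝ, 0 ≤ L ∧ ∀ {a t x y : ℝ}, 0 < a → 0 < t → x ∈ Icc 0 a → y ∈ Icc 0 a →
      (t ≤ a ^ 2 → y + a / k ≤ x) →
      renormKernel a t x y ≤ L * (y * (sin (π * x / a) / a ^ 2)) := by
  obtain ⟨L₁, hL₁, hsmall⟩ := exists_pker_le_mul_sub hk
  obtain ⟨L₂, hL₂, hlarge⟩ := exists_renormKernel_le_sin_mul_sin
  refine ⟨exp (π ^ 2 / 2) * (L₁ * (k / 2)) + L₂ * π, by positivity, ?_⟩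
  intro a t x y ha ht hx hy hsep
  have hsx := sin_pi_mul_div_nonneg hx
  have hy0 : 0 ≤ y := hy.1
  rcases le_total t (a ^ 2) with hta | hta
  · have hxk : x ∈ Icc (a / k) a := ⟨by linarith [hsep hta], hx.2⟩
    have hpker : pker a t x y ≤ L₁ * (k / 2) * (y * (sin (π * x / a) / a ^ 2)) := by
      calc pker a t x y ≤ L₁ * (y * (a - x)) / a ^ 3 := hsmall ha ht hx.2 hy0 (hsep hta)
        _ ≤ L₁ * (y * (k / 2 * a * sin (π * x / a))) / a ^ 3 := by
            gcongr; exact sub_le_mul_sin_pi_mul_div ha hk hxk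
        _ = _ := by field_simp
    calc renormKernel a t x y
        ≤ exp (π ^ 2 / 2) * (L₁ * (k / 2) * (y * (sin (π * x / a) / a ^ 2))) :=
          renormKernel_le_of_le_sq ha hta (by positivity) hpker
      _ ≤ _ := by rw [← mul_assoc]; gcongr; exact le_add_of_nonneg_right (by positivity)
  · calc renormKernel a t x y ≤ L₂ / a * (sin (π * x / a) * sin (π * y / a)) := hlarge ha hta hx hy
      _ ≤ L₂ / a * (sin (π * x / a) * (π * y / a)) := by gcongr; exact sin_le (by positivity)
      _ = L₂ * π * (y * (sin (π * x / a) / a ^ 2)) := by field_simp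
      _ ≤ _ := by gcongr; exact le_add_of_nonneg_left (by positivity)

end RenormalizedKernel

section TiltedKernel

variable {a t x r μ : ℝ}

/-- The density of branching Brownian motion with drift `-μ` killed on leaving `(0, a)`, with `μ` a
free parameter: `pdens a` is definitionally the case `μ = muFn a`. -/
noncomputable def tiltedKernel (μ a t x y : ℝ) : ℝ :=
  exp (μ * (x - y) + π ^ 2 * t / (2 * a ^ 2)) * pker a t x y

theorem tiltedKernel_eq (μ a t x r y : ℝ) :
    tiltedKernel μ a t x y =
      exp (μ * (x - r)) * (exp (-(μ * (y - r))) * renormKernel a t x y) := by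
  rw [renormKernel, ← mul_assoc, ← mul_assoc, ← exp_add, ← exp_add, tiltedKernel]
  ring_nf

theorem intervalIntegrable_tiltedKernel (μ : ℝ) (ha : 0 < a) (ht : 0 < t) (x r m : ℝ) :
    IntervalIntegrable (tiltedKernel μ a t x) volume r m := by
  have := continuous_pker ha ht x
  unfold tiltedKernel
  exact Continuous.intervalIntegrable (by fun_prop) r m

theorem exists_integral_tiltedKernel_le_exp :
    ∃ K : ℝ, 0 ≤ K ∧ ∀ {μ a t x r : ℝ}, 0 ≤ μ → 0 < a → 0 < t → x ∈ Icc 0 a → r ∈ Icc 0 a →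
      ∫ y in r..a, tiltedKernel μ a t x y ≤ K * exp (μ * (x - r)) := by
  obtain ⟨K, hK, hbound⟩ := exists_renormKernel_le_heatKernel_add
  refine ⟨2 * K, by positivity, ?_⟩
  intro μ a t x r hμ ha ht hx hr
  have hle : ∀ y ∈ Icc r a,
      tiltedKernel μ a t x y ≤ exp (μ * (x - r)) * (K * (heatKernel t (y - x) + 1 / a)) := by
    intro y hy
    have hg := heatKernel_nonneg t (y - x)
    have hdecay : exp (-(μ * (y - r))) ≤ 1 :=
      exp_le_one_iff.2 (neg_nonpos.2 (mul_nonneg hμ (sub_nonneg.2 hy.1)))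
    rw [tiltedKernel_eq μ a t x r y]
    refine mul_le_mul_of_nonneg_left ?_ (exp_pos _).le
    calc exp (-(μ * (y - r))) * renormKernel a t x y
        ≤ exp (-(μ * (y - r))) * (K * (heatKernel t (y - x) + 1 / a)) := by
          gcongr; exact hbound ha ht hx ⟨hr.1.trans hy.1, hy.2⟩
      _ ≤ _ := mul_le_of_le_one_left (by positivity) hdecay
  have hlength : (a - r) * (1 / a) ≤ 1 := by
    rw [mul_one_div, div_le_one ha]; linarith [hr.1]
  calc ∫ y in r..a, tiltedKernel μ a t x y
      ≤ ∫ y in r..a, exp (μ * (x - r)) * (K * (heatKernel t (y - x) + 1 / a)) :=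
        intervalIntegral.integral_mono_on hr.2 (intervalIntegrable_tiltedKernel μ ha ht x r a)
          (Continuous.intervalIntegrable (by fun_prop) _ _) hle
    _ = exp (μ * (x - r)) * (K * ((∫ y in r..a, heatKernel t (y - x)) + (a - r) * (1 / a))) := by
        rw [intervalIntegral.integral_const_mul, intervalIntegral.integral_const_mul,
          intervalIntegral.integral_add (Continuous.intervalIntegrable (by fun_prop) _ _)
            intervalIntegrable_const, intervalIntegral.integral_const, smul_eq_mul]
    _ ≤ exp (μ * (x - r)) * (K * (1 + 1)) := by
        gcongr; exact integral_heatKernel_sub_le_one ht x hr.2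
    _ = 2 * K * exp (μ * (x - r)) := by ring

theorem exists_integral_tiltedKernel_le_sin {δ k : ℝ} (hδ : 0 < δ) (hk : 0 < k) :
    ∃ L : ℝ, 0 ≤ L ∧ ∀ {μ a t x r m : ℝ}, δ ≤ μ → 0 < a → 0 < t → x ∈ Icc 0 a → 0 ≤ r → r ≤ m →
      m ≤ a → (t ≤ a ^ 2 → m + a / k ≤ x) →
      ∫ y in r..m, tiltedKernel μ a t x y ≤
        L * (exp (μ * (x - r)) * ((1 + r) * (sin (π * x / a) / a ^ 2))) := by
  obtain ⟨L, hL, hbound⟩ := exists_renormKernel_le_mul_sin hk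
  refine ⟨L * (1 / δ + 1 / δ ^ 2), by positivity, ?_⟩
  intro μ a t x r m hμδ ha ht hx hr hrm hma hsep
  have hμ : 0 < μ := hδ.trans_le hμδ
  have hsx := sin_pi_mul_div_nonneg hx
  have hle : ∀ y ∈ Icc r m, tiltedKernel μ a t x y ≤
      exp (μ * (x - r)) * (L * (sin (π * x / a) / a ^ 2)) * (exp (-(μ * (y - r))) * y) := by
    intro y hy
    calc tiltedKernel μ a t x y
        = exp (μ * (x - r)) * (exp (-(μ * (y - r))) * renormKernel a t x y) :=
          tiltedKernel_eq μ a t x r y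
      _ ≤ exp (μ * (x - r)) * (exp (-(μ * (y - r))) * (L * (y * (sin (π * x / a) / a ^ 2)))) := by
          gcongr
          exact hbound ha ht hx ⟨hr.trans hy.1, hy.2.trans hma⟩ fun h => by linarith [hsep h, hy.2]
      _ = _ := by ring
  have hmoment : r / μ + 1 / μ ^ 2 ≤ (1 / δ + 1 / δ ^ 2) * (1 + r) := by
    calc r / μ + 1 / μ ^ 2 ≤ r / δ + 1 / δ ^ 2 := by gcongr
      _ ≤ r / δ + 1 / δ ^ 2 + (1 / δ + 1 / δ ^ 2 * r) := le_add_of_nonneg_right (by positivity)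
      _ = (1 / δ + 1 / δ ^ 2) * (1 + r) := by ring
  calc ∫ y in r..m, tiltedKernel μ a t x y
      ≤ ∫ y in r..m,
          exp (μ * (x - r)) * (L * (sin (π * x / a) / a ^ 2)) * (exp (-(μ * (y - r))) * y) :=
        intervalIntegral.integral_mono_on hrm (intervalIntegrable_tiltedKernel μ ha ht x r m)
          (Continuous.intervalIntegrable (by fun_prop) _ _) hle
    _ = exp (μ * (x - r)) * (L * (sin (π * x / a) / a ^ 2)) *
          ∫ y in r..m, exp (-(μ * (y - r))) * y := intervalIntegral.integral_const_mul _ _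
    _ ≤ exp (μ * (x - r)) * (L * (sin (π * x / a) / a ^ 2)) * ((1 / δ + 1 / δ ^ 2) * (1 + r)) := by
        gcongr
        exact (integral_exp_neg_mul_mul_id_le hμ (hr.trans hrm)).trans hmoment
    _ = _ := by ring

theorem exp_mul_sub_le_of_add_div_le {δ k m : ℝ} (hδ : 0 < δ) (hk : 0 < k) (hμ : δ ≤ μ)
    (ha : 0 < a) (hm : r + a / k ≤ m) :
    exp (μ * (x - m)) ≤ 24 * (k / δ) ^ 4 * (exp (μ * (x - r)) / a ^ 4) := by
  have hgap : δ * (a / k) ≤ μ * (m - r) := by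
    have : 0 < a / k := by positivity
    exact mul_le_mul hμ (by linarith) this.le (hδ.le.trans hμ)
  have hdecay : exp (-(δ * (a / k))) ≤ 24 / (δ * (a / k)) ^ 4 :=
    exp_neg_le_factorial_div_pow (by positivity) 4
  calc exp (μ * (x - m)) = exp (μ * (x - r)) * exp (-(μ * (m - r))) := by
        rw [← exp_add]; ring_nf
    _ ≤ exp (μ * (x - r)) * (24 / (δ * (a / k)) ^ 4) := by
        gcongr
        exact (exp_le_exp.2 (neg_le_neg hgap)).trans hdecay
    _ = 24 * (k / δ) ^ 4 * (exp (μ * (x - r)) / a ^ 4) := by field_simp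

theorem exists_integral_tiltedKernel_le_sin_add {δ k : ℝ} (hδ : 0 < δ) (hk : 0 < k) :
    ∃ L : ℝ, 0 ≤ L ∧ ∀ {μ a t x r : ℝ}, δ ≤ μ → 0 < a → 0 < t → x ∈ Icc 0 a → r ∈ Icc 0 a →
      (t ≤ a ^ 2 → r + a / k ≤ x) →
      ∫ y in r..a, tiltedKernel μ a t x y ≤ L * exp (μ * (x - r)) *
        ((1 + r) * (sin (π * x / a) / a ^ 2) + (if t ≤ a ^ 2 then 1 else 0) / a ^ 4) := by
  obtain ⟨K, hK, htail⟩ := exists_integral_tiltedKernel_le_exp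
  have hk2 : 0 < 2 * k := by positivity
  obtain ⟨L, hL, hbulk⟩ := exists_integral_tiltedKernel_le_sin hδ hk2
  refine ⟨L + K * (24 * (2 * k / δ) ^ 4), by positivity, ?_⟩
  intro μ a t x r hμ ha ht hx hr hsep
  have hr0 : 0 ≤ r := hr.1
  have hsx := sin_pi_mul_div_nonneg hx
  split_ifs with hta
  · set m := x - a / (2 * k) with hm
    have hhalf : a / k = a / (2 * k) + a / (2 * k) := by field_simp; norm_num
    have hgap : 0 < a / (2 * k) := by positivity
    have hrm : r + a / (2 * k) ≤ m := by linarith [hsep hta]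
    have hma : m ≤ a := by linarith [hx.2]
    have hbulk_le := hbulk hμ ha ht hx hr0 (by linarith) hma fun _ => by rw [hm, sub_add_cancel]
    have htail_le := htail (r := m) (hδ.le.trans hμ) ha ht hx ⟨by linarith, hma⟩
    have hexp := exp_mul_sub_le_of_add_div_le (x := x) hδ hk2 hμ ha hrm
    rw [← intervalIntegral.integral_add_adjacent_intervals
      (intervalIntegrable_tiltedKernel μ ha ht x r m)
      (intervalIntegrable_tiltedKernel μ ha ht x m a)]
    set S := sin (π * x / a) / a ^ 2
    set E := exp (μ * (x - r))
    calc _ ≤ L * (E * ((1 + r) * S)) + K * (24 * (2 * k / δ) ^ 4 * (E / a ^ 4)) :=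
          add_le_add hbulk_le (htail_le.trans (by gcongr))
      _ ≤ L * (E * ((1 + r) * S)) + K * (24 * (2 * k / δ) ^ 4 * (E / a ^ 4)) +
            (K * (24 * (2 * k / δ) ^ 4) * E * ((1 + r) * S) + L * (E / a ^ 4)) :=
          le_add_of_nonneg_right (by positivity)
      _ = _ := by ring
  · have hbulk_le := hbulk hμ ha ht hx hr0 hr.2 le_rfl fun h => absurd h hta
    rw [zero_div, add_zero, mul_assoc]
    refine hbulk_le.trans ?_
    gcongr
    exact le_add_of_nonneg_right (by positivity)

end TiltedKernel

theorem stmt18_general {δ k : ℝ} (hδ : 0 < δ) (hk : 0 < k) :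
    ∃ C : ℝ, 0 < C ∧ ∀ a : ℝ, 0 < a → ∀ μ : ℝ, δ ≤ μ → ∀ t : ℝ, 0 < t →
      (∀ x ∈ Icc 0 a, ∀ r ∈ Icc 0 a, (t ≤ a ^ 2 → r + a / k ≤ x) →
        (∫ y in r..a, tiltedKernel μ a t x y) ≤
          C * (1 + r) * (exp (μ * (a - r)) / a ^ 3) *
            (a * exp (μ * (x - a)) * sin (π * x / a) +
              (if t ≤ a ^ 2 then 1 else 0) * ((1 + r ^ 2) / a) * exp (μ * (x - a)))) ∧
      (∀ x ∈ Icc 0 a, ∀ r ∈ Icc 0 a,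
        (∫ y in r..a, tiltedKernel μ a t x y) ≤ C * exp (μ * (x - r))) := by
  obtain ⟨K, hK, htail⟩ := exists_integral_tiltedKernel_le_exp
  obtain ⟨L, hL, hsharp⟩ := exists_integral_tiltedKernel_le_sin_add hδ hk
  refine ⟨L + K + 1, by positivity, fun a ha μ hμ t ht => ⟨fun x hx r hr hsep => ?_,
    fun x hx r hr => ?_⟩⟩
  · have hr0 : 0 ≤ r := hr.1
    have hsx := sin_pi_mul_div_nonneg hx
    have hind : (0 : ℝ) ≤ if t ≤ a ^ 2 then 1 else 0 := by positivity
    refine (hsharp hμ ha ht hx hr hsep).trans ?_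
    set I : ℝ := if t ≤ a ^ 2 then 1 else 0
    calc L * exp (μ * (x - r)) * ((1 + r) * (sin (π * x / a) / a ^ 2) + I / a ^ 4)
        ≤ (L + K + 1) * exp (μ * (x - r)) *
            ((1 + r) * (sin (π * x / a) / a ^ 2) + (1 + r) * (1 + r ^ 2) * I / a ^ 4) := by
          gcongr
          · linarith
          · exact le_mul_of_one_le_left hind (one_le_mul_of_one_le_of_one_le
              (by linarith) (by linarith [sq_nonneg r]))
      _ = _ := by
          rw [show μ * (x - r) = μ * (a - r) + μ * (x - a) by ring, exp_add]
          field_simp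
  · refine (htail (hδ.le.trans hμ) ha ht hx hr).trans ?_
    gcongr
    linarith

/-- Upper bounds for the expected number of particles in `[r,a]` at time `t`. -/
theorem stmt18 :
    ∃ C : ℝ, 0 < C ∧ ∀ a : ℝ, π ≤ a → (1/2 : ℝ) ≤ muFn a → ∀ t : ℝ, 0 < t →
      (∀ x ∈ Set.Icc (0:ℝ) a, ∀ r ∈ Set.Icc (0:ℝ) a, (t ≤ a^2 → r + a/20 ≤ x) →
        (∫ y in r..a, pdens a t x y) ≤
          C * (1 + r) * (Real.exp (muFn a * (a - r)) / a^3) *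
            (wZ a x + (if t ≤ a^2 then 1 else 0) * ((1 + r^2) / a) * wY a x)) ∧
      (∀ x ∈ Set.Icc (0:ℝ) a, ∀ r ∈ Set.Icc (0:ℝ) a,
        (∫ y in r..a, pdens a t x y) ≤ C * Real.exp (muFn a * (x - r))) := by
  obtain ⟨C, hC, h⟩ := stmt18_general (δ := 1 / 2) (k := 20) (by norm_num) (by norm_num)
  exact ⟨C, hC, fun a ha hμ t ht => h a (pi_pos.trans_le ha) (muFn a) hμ t ht⟩
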